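/- The category IsoSht(F) of iso-Shtukas over the function field F is a semisimple abelian category: every object is isomorphic to a finite direct sum of simple objects. Equivalently, for every iso-Shtuka (V, φ), every F̆-subspace W ⊆ V with φ(W) = W admits an F̆-subspace W' with φ(W') = W' and V = W ⊕ W'. -/

import Mathlib

/-!
Correcting a projection of `V` onto `W` by an element of the iso-Shtuka `H = Hom(V / W, W)` makes
it `φ`-equivariant, with a stable complement as kernel, as soon as `Φ - 1` is surjective on `H`.

It is surjective on every iso-Shtuka. Since `F̆ / F` is algebraic, each vector lies in a
finite-dimensional `Φ`-stable `F`-subspace, and by Fitting's lemma in characteristic `p` it is the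
sum of a vector in the range and one in the kernel of `(Φ - 1) ^ p ^ r = Φ ^ p ^ r - 1`. The range
is contained in that of `Φ - 1`. If `Φ ^ n u = u` with `n = p ^ r`, take `c` in `k̄` such that
`c ^ q ^ n = c + 1`: then `Φ ^ n (c u) - c u = u`, so the kernel is contained in the range.
-/

open Polynomial TensorProduct

section Fitting

lemma sub_one_pow_char_pow {R A : Type*} [CommRing R] [Ring A] [Algebra R A] (p : ℕ)
    [Fact p.Prime] [CharP R p] (a : A) (r : ℕ) : (a - 1) ^ p ^ r = a ^ p ^ r - 1 := by
  -- A trivial `A` does not have characteristic `p`, but the polynomial ring `R[X]` does.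
  simpa using congrArg (aeval a) (sub_pow_char_pow (R := R[X]) (p := p) (n := r) X 1)

lemma exists_isCompl_ker_range_pow_char_pow_sub_one {F M : Type*} [Field F] [AddCommGroup M]
    [Module F M] [FiniteDimensional F M] (p : ℕ) [Fact p.Prime] [CharP F p]
    (T : Module.End F M) :
    ∃ r, IsCompl (LinearMap.ker (T ^ p ^ r - 1)) (LinearMap.range (T ^ p ^ r - 1)) := by
  obtain ⟨N, hN⟩ := Filter.eventually_atTop.1 (T - 1).eventually_isCompl_ker_pow_range_pow
  refine ⟨N, ?_⟩
  rw [← sub_one_pow_char_pow (R := F)]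
  exact hN _ (Nat.lt_pow_self (Fact.out : p.Prime).one_lt).le

lemma exists_le_ker_sup_range_pow_char_pow_sub_one {F M : Type*} [Field F] [AddCommGroup M]
    [Module F M] (p : ℕ) [Fact p.Prime] [CharP F p] (T : Module.End F M)
    (U : Submodule F M) [FiniteDimensional F U] (hU : ∀ u ∈ U, T u ∈ U) :
    ∃ r, U ≤ LinearMap.ker (T ^ p ^ r - 1) ⊔ LinearMap.range (T ^ p ^ r - 1) := by
  obtain ⟨r, hr⟩ := exists_isCompl_ker_range_pow_char_pow_sub_one p (T.restrict hU)
  have coe_pow_sub_one (x : U) : ((T.restrict hU ^ p ^ r - 1) x : M) = (T ^ p ^ r - 1) x := by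
    simp only [LinearMap.sub_apply, Module.End.one_apply, Submodule.coe_sub,
      Module.End.pow_restrict _ hU, LinearMap.coe_restrict_apply]
  refine ⟨r, fun v hv ↦ ?_⟩
  obtain ⟨u, hu, w, ⟨z, rfl⟩, huw⟩ :=
    Submodule.mem_sup.1 (hr.sup_eq_top ▸ Submodule.mem_top (x := (⟨v, hv⟩ : U)))
  refine Submodule.mem_sup.2 ⟨u, ?_, _, ⟨z, (coe_pow_sub_one z).symm⟩, congrArg Subtype.val huw⟩
  rw [LinearMap.mem_ker, ← coe_pow_sub_one, LinearMap.mem_ker.1 hu, ZeroMemClass.coe_zero]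

end Fitting

section SemilinearRestrictScalars

variable {F L M : Type*} [CommRing F] [CommRing L] [Algebra F L] [AddCommGroup M] [Module L M]
  [Module F M] [IsScalarTower F L M]

/-- A semilinear endomorphism over an `F`-algebra endomorphism of `L`, regarded as an `F`-linear
endomorphism, so that the Fitting decomposition over `F` applies to it. -/
def semilinearRestrictScalars {σ : L →ₐ[F] L} (Φ : M →ₛₗ[(σ : L →+* L)] M) : Module.End F M where
  toFun := Φ
  map_add' := map_add Φ
  map_smul' a m := by
    rw [← algebraMap_smul L a m, map_smulₛₗ, RingHom.coe_coe, σ.commutes, algebraMap_smul,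
      RingHom.id_apply]

lemma semilinearRestrictScalars_apply {σ : L →ₐ[F] L} (Φ : M →ₛₗ[(σ : L →+* L)] M) (m : M) :
    semilinearRestrictScalars (F := F) Φ m = Φ m := rfl

lemma semilinearRestrictScalars_pow_smul {σ : L →ₐ[F] L} (Φ : M →ₛₗ[(σ : L →+* L)] M) (n : ℕ)
    (a : L) (m : M) :
    (semilinearRestrictScalars Φ ^ n : Module.End F M) (a • m) =
      (σ ^ n) a • (semilinearRestrictScalars Φ ^ n : Module.End F M) m := by
  induction n with
  | zero => simp
  | succ n ih =>
    rw [pow_succ', Module.End.mul_apply, ih, semilinearRestrictScalars_apply, map_smulₛₗ,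
      pow_succ' σ]
    rfl

lemma ker_semilinearRestrictScalars_pow_sub_one_le_range {σ : L →ₐ[F] L}
    (Φ : M →ₛₗ[(σ : L →+* L)] M) {n : ℕ} {c : L} (hc : (σ ^ n) c = c + 1) :
    LinearMap.ker (semilinearRestrictScalars Φ ^ n - 1 : Module.End F M) ≤
      LinearMap.range (semilinearRestrictScalars Φ ^ n - 1 : Module.End F M) := by
  intro u hu
  rw [LinearMap.mem_ker, LinearMap.sub_apply, Module.End.one_apply, sub_eq_zero] at hu
  refine ⟨c • u, ?_⟩
  rw [LinearMap.sub_apply, Module.End.one_apply, semilinearRestrictScalars_pow_smul, hu, hc,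
    add_smul, one_smul, add_sub_cancel_left]

end SemilinearRestrictScalars

lemma exists_finiteDimensional_subfield_map_mem {F L : Type*} [Field F] [Field L]
    [Algebra F L] [Algebra.IsAlgebraic F L] (σ : L →ₐ[F] L) {S : Set L} (hS : S.Finite) :
    ∃ E : IntermediateField F L, FiniteDimensional F E ∧ S ⊆ E ∧ ∀ x ∈ E, σ x ∈ E := by
  have := hS.to_subtype
  have : FiniteDimensional F (IntermediateField.adjoin F S) :=
    IntermediateField.finiteDimensional_adjoin fun x _ ↦ Algebra.IsIntegral.isIntegral x
  let N := IntermediateField.normalClosure F (IntermediateField.adjoin F S) L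
  refine ⟨N, inferInstance,
    fun x hx ↦ IntermediateField.le_normalClosure _ (IntermediateField.subset_adjoin F S hx), ?_⟩
  suffices h : N ≤ N.comap σ from h
  refine iSup_le fun f ↦ ?_
  rintro _ ⟨x, rfl⟩
  exact (σ.comp f).fieldRange_le_normalClosure ⟨x, rfl⟩

lemma exists_finiteDimensional_mem_map_mem {F L M : Type*} [Field F] [Field L] [Algebra F L]
    [Algebra.IsAlgebraic F L] [AddCommGroup M] [Module L M] [FiniteDimensional L M] [Module F M]
    [IsScalarTower F L M] {σ : L →ₐ[F] L} (Φ : M →ₛₗ[(σ : L →+* L)] M) (v : M) :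
    ∃ U : Submodule F M, FiniteDimensional F U ∧ v ∈ U ∧ ∀ u ∈ U, Φ u ∈ U := by
  let b := Module.finBasis L M
  obtain ⟨E, _, hSE, hσE⟩ := exists_finiteDimensional_subfield_map_mem σ
    ((Set.finite_range (b.repr v)).union
      (Set.finite_range fun ij : _ × _ ↦ b.repr (Φ (b ij.1)) ij.2))
  have mem_span (m : M) : m ∈ Submodule.span E (Set.range b) ↔ ∀ i, b.repr m i ∈ E := by
    simp [b.mem_span_iff_repr_mem E]
  have : IsScalarTower F E M := ⟨fun a x m ↦ smul_assoc a (x : L) m⟩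
  have : FiniteDimensional E (Submodule.span E (Set.range b)) :=
    FiniteDimensional.span_of_finite E (Set.finite_range b)
  refine ⟨(Submodule.span E (Set.range b)).restrictScalars F,
    FiniteDimensional.trans F E (Submodule.span E (Set.range b)),
    (mem_span v).2 fun i ↦ hSE (.inl ⟨i, rfl⟩), fun u hu ↦ ?_⟩
  refine (mem_span _).2 fun j ↦ ?_
  rw [← b.sum_repr u, map_sum, map_sum, Finsupp.coe_finsetSum, Finset.sum_apply]
  refine sum_mem fun i _ ↦ ?_
  rw [map_smulₛₗ, map_smul]
  exact mul_mem (hσE _ ((mem_span u).1 hu i)) (hSE (.inr ⟨(i, j), rfl⟩))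

theorem exists_semilinear_sub_self_eq {F L M : Type*} [Field F] [Field L] [Algebra F L]
    [Algebra.IsAlgebraic F L] [AddCommGroup M] [Module L M] [FiniteDimensional L M]
    (p : ℕ) [Fact p.Prime] [CharP F p] {σ : L →ₐ[F] L}
    (hσ : ∀ r, ∃ c, (σ ^ p ^ r) c = c + 1) (Φ : M →ₛₗ[(σ : L →+* L)] M) (v : M) :
    ∃ x, Φ x - x = v := by
  let : Module F M := Module.compHom M (algebraMap F L)
  have : IsScalarTower F L M := .of_compHom F L M
  let T : Module.End F M := semilinearRestrictScalars Φ
  obtain ⟨U, _, hvU, hU⟩ := exists_finiteDimensional_mem_map_mem (F := F) Φ v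
  obtain ⟨r, hr⟩ := exists_le_ker_sup_range_pow_char_pow_sub_one p T U hU
  obtain ⟨c, hc⟩ := hσ r
  obtain ⟨y, hy⟩ : v ∈ LinearMap.range (T ^ p ^ r - 1) :=
    sup_le (ker_semilinearRestrictScalars_pow_sub_one_le_range Φ hc) le_rfl (hr hvU)
  obtain ⟨g, hg⟩ := sub_one_dvd_pow_sub_one T (p ^ r)
  exact ⟨g y, by rw [← hy, hg]; rfl⟩

section Projection

open LinearMap

lemma image_eq_self_iff_forall_mem_iff {α : Type*} {f : α → α} (hf : f.Bijective) {s : Set α} :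
    f '' s = s ↔ ∀ x, f x ∈ s ↔ x ∈ s := by
  simp only [← Set.eq_preimage_iff_image_eq hf, Set.ext_iff, Set.mem_preimage, iff_comm]

variable {R V : Type*} [CommRing R] [AddCommGroup V] [Module R V]

/-- `Hom(V / W, W)`, realised inside `End V` as the endomorphisms that vanish on `W` and take
values in `W`. The projections onto `W` form a coset of it. -/
def quotientHoms (W : Submodule R V) : Submodule R (Module.End R V) :=
  Submodule.compatibleMaps W ⊥ ⊓ Submodule.compatibleMaps ⊤ W

lemma mem_quotientHoms {W : Submodule R V} {f : Module.End R V} :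
    f ∈ quotientHoms W ↔ (∀ w ∈ W, f w = 0) ∧ ∀ v, f v ∈ W := by
  simp [quotientHoms, Submodule.compatibleMaps, SetLike.le_def]

lemma isProj_sub_mem_quotientHoms {W : Submodule R V} {π π' : Module.End R V} (hπ : IsProj W π)
    (hπ' : IsProj W π') : π - π' ∈ quotientHoms W :=
  mem_quotientHoms.2 ⟨
    fun w hw ↦ by rw [LinearMap.sub_apply, hπ.map_id w hw, hπ'.map_id w hw, sub_self],
    fun v ↦ sub_mem (hπ.map_mem v) (hπ'.map_mem v)⟩

lemma isProj_add_of_mem_quotientHoms {W : Submodule R V} {π f : Module.End R V} (hπ : IsProj W π)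
    (hf : f ∈ quotientHoms W) : IsProj W (π + f) where
  map_mem v := add_mem (hπ.map_mem v) ((mem_quotientHoms.1 hf).2 v)
  map_id w hw := by
    rw [LinearMap.add_apply, hπ.map_id w hw, (mem_quotientHoms.1 hf).1 w hw, add_zero]

variable {σ σ' : R →+* R} [RingHomInvPair σ σ'] [RingHomInvPair σ' σ] {φ : V ≃ₛₗ[σ] V}
  {W : Submodule R V}

lemma symm_mem_iff_of_mem_iff (hW : ∀ v, φ v ∈ W ↔ v ∈ W) (v : V) : φ.symm v ∈ W ↔ v ∈ W := by
  rw [← hW, φ.apply_symm_apply]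

lemma isProj_conj (hW : ∀ v, φ v ∈ W ↔ v ∈ W) {π : Module.End R V} (hπ : IsProj W π) :
    IsProj W (φ.conj π) where
  map_mem v := (hW _).2 (hπ.map_mem _)
  map_id w hw := by
    rw [φ.conj_apply_apply, hπ.map_id _ ((symm_mem_iff_of_mem_iff hW w).2 hw), φ.apply_symm_apply]

lemma conj_mem_quotientHoms (hW : ∀ v, φ v ∈ W ↔ v ∈ W) {f : Module.End R V}
    (hf : f ∈ quotientHoms W) : φ.conj f ∈ quotientHoms W := by
  rw [mem_quotientHoms] at hf ⊢
  refine ⟨fun w hw ↦ ?_, fun v ↦ (hW _).2 (hf.2 _)⟩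
  rw [φ.conj_apply_apply, hf.1 _ ((symm_mem_iff_of_mem_iff hW w).2 hw), map_zero]

lemma apply_mem_ker_iff_of_conj_eq_self {π : Module.End R V} (hπ : φ.conj π = π) (v : V) :
    φ v ∈ ker π ↔ v ∈ ker π := by
  have commutes : π (φ v) = φ (π v) := by
    conv_lhs => rw [← hπ, φ.conj_apply_apply, φ.symm_apply_apply]
  rw [mem_ker, mem_ker, commutes, map_eq_zero_iff φ φ.injective]

end Projection

section Semisimple

variable {F L V : Type*} [Field F] [Field L] [Algebra F L] [Algebra.IsAlgebraic F L]
  [AddCommGroup V] [Module L V] [FiniteDimensional L V] (p : ℕ) [Fact p.Prime] [CharP F p]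
  {σ : L →ₐ[F] L} {σ' : L →+* L} [RingHomInvPair (σ : L →+* L) σ']
  [RingHomInvPair σ' (σ : L →+* L)] {φ : V ≃ₛₗ[(σ : L →+* L)] V} {W : Submodule L V}

lemma exists_isProj_conj_eq_self (hσ : ∀ r, ∃ c, (σ ^ p ^ r) c = c + 1)
    (hW : ∀ v, φ v ∈ W ↔ v ∈ W) :
    ∃ π : Module.End L V, LinearMap.IsProj W π ∧ φ.conj π = π := by
  obtain ⟨W₀, hW₀⟩ := W.exists_isCompl
  let π₀ : Module.End L V := W.projection W₀ hW₀
  have hπ₀ : LinearMap.IsProj W π₀ :=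
    ⟨W.projection_apply_mem hW₀, fun w hw ↦ W.projection_apply_left hW₀ ⟨w, hw⟩⟩
  let Φ : quotientHoms W →ₛₗ[(σ : L →+* L)] quotientHoms W :=
    φ.conj.toLinearMap.restrict fun _ hf ↦ conj_mem_quotientHoms hW hf
  obtain ⟨f, hf⟩ := exists_semilinear_sub_self_eq p hσ Φ
    ⟨π₀ - φ.conj π₀, isProj_sub_mem_quotientHoms hπ₀ (isProj_conj hW hπ₀)⟩
  have conj_f : φ.conj (f : Module.End L V) - f = π₀ - φ.conj π₀ := congrArg Subtype.val hf
  refine ⟨π₀ + f, isProj_add_of_mem_quotientHoms hπ₀ f.2, ?_⟩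
  rw [map_add, sub_eq_iff_eq_add.1 conj_f]
  abel

theorem exists_isCompl_apply_mem_iff (hσ : ∀ r, ∃ c, (σ ^ p ^ r) c = c + 1)
    (hW : ∀ v, φ v ∈ W ↔ v ∈ W) :
    ∃ W' : Submodule L V, (∀ v, φ v ∈ W' ↔ v ∈ W') ∧ IsCompl W W' := by
  obtain ⟨π, hπ, conj_π⟩ := exists_isProj_conj_eq_self p hσ hW
  exact ⟨LinearMap.ker π, apply_mem_ker_iff_of_conj_eq_self conj_π, hπ.isCompl⟩

end Semisimple

lemma exists_pow_eq_add_one {K : Type*} [Field K] [IsAlgClosed K] {n : ℕ} (hn : 1 < n) :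
    ∃ c : K, c ^ n = c + 1 := by
  have hlt : (X + C 1 : K[X]).degree < (X ^ n : K[X]).degree := by
    rw [degree_X_add_C, degree_X_pow]
    exact_mod_cast hn
  have hdeg : (X ^ n - (X + C 1) : K[X]).degree ≠ 0 := by
    rw [degree_sub_eq_left_of_degree_lt hlt, degree_X_pow]
    exact_mod_cast (zero_lt_one.trans hn).ne'
  obtain ⟨c, hc⟩ := IsAlgClosed.exists_root _ hdeg
  exact ⟨c, by simpa [sub_eq_zero] using hc⟩

section TensorEquiv

variable {k K F L : Type*} [CommRing k] [CommRing K] [Algebra k K] [CommRing F] [Algebra k F]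
  [CommRing L] [Algebra k L] [Algebra F L] [Algebra K L] [IsScalarTower k F L]
  [IsScalarTower k K L]
  (htensor : Function.Bijective (Algebra.TensorProduct.productMap
    (IsScalarTower.toAlgHom k F L) (IsScalarTower.toAlgHom k K L)))

/-- The identification `F ⊗[k] K ≃ L`, `a ⊗ c ↦ a * c`, of a ring `L` for which the multiplication
map is bijective. -/
noncomputable def tensorEquiv : F ⊗[k] K ≃ₐ[F] L :=
  .ofBijective (Algebra.TensorProduct.productLeftAlgHom (Algebra.ofId F L)
    (IsScalarTower.toAlgHom k K L)) htensor

lemma tensorEquiv_tmul (a : F) (c : K) :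
    tensorEquiv htensor (a ⊗ₜ c) = algebraMap F L a * algebraMap K L c :=
  rfl

lemma tensorEquiv_one_tmul (c : K) : tensorEquiv htensor (1 ⊗ₜ c) = algebraMap K L c := by
  rw [tensorEquiv_tmul, map_one, one_mul]

include htensor in
lemma isIntegral_of_tensorEquiv [Algebra.IsIntegral k K] : Algebra.IsIntegral F L :=
  .of_surjective (tensorEquiv htensor : F ⊗[k] K →ₐ[F] L) (tensorEquiv htensor).surjective

end TensorEquiv

section Frobenius

variable {k K F L : Type*} [Field k] [Fintype k] [Field K] [Algebra k K] [Algebra.IsAlgebraic k K]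
  [CommRing F] [Algebra k F] [CommRing L] [Algebra k L] [Algebra F L] [Algebra K L]
  [IsScalarTower k F L] [IsScalarTower k K L]
  (htensor : Function.Bijective (Algebra.TensorProduct.productMap
    (IsScalarTower.toAlgHom k F L) (IsScalarTower.toAlgHom k K L)))

/-- The automorphism `id ⊗ Frob_q` of `L = F ⊗[k] K`, where `q` is the number of elements of `k`. -/
noncomputable def partialFrobenius : L ≃ₐ[F] L :=
  (tensorEquiv htensor).autCongr <| Algebra.TensorProduct.congr .refl
    (FiniteField.frobeniusAlgEquivOfAlgebraic k K)

lemma partialFrobenius_algebraMap (c : K) :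
    partialFrobenius htensor (algebraMap K L c) = algebraMap K L c ^ Fintype.card k := by
  rw [partialFrobenius, AlgEquiv.autCongr_apply, AlgEquiv.trans_apply, AlgEquiv.trans_apply,
    ← tensorEquiv_one_tmul htensor, AlgEquiv.symm_apply_apply, Algebra.TensorProduct.congr_apply,
    Algebra.TensorProduct.map_tmul, map_one, AlgEquiv.coe_toAlgHom,
    FiniteField.coe_frobeniusAlgEquivOfAlgebraic, tensorEquiv_one_tmul, map_pow,
    tensorEquiv_one_tmul]

lemma partialFrobenius_pow_algebraMap (n : ℕ) (c : K) :
    ((partialFrobenius htensor : L →ₐ[F] L) ^ n) (algebraMap K L c) =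
      algebraMap K L (c ^ Fintype.card k ^ n) := by
  induction n with
  | zero => simp
  | succ n ih =>
    rw [pow_succ', AlgHom.mul_apply, ih, AlgEquiv.coe_toAlgHom, partialFrobenius_algebraMap,
      ← map_pow, ← pow_mul, pow_succ]

lemma exists_partialFrobenius_pow_eq_add_one [IsAlgClosed K] {n : ℕ} (hn : n ≠ 0) :
    ∃ c, ((partialFrobenius htensor : L →ₐ[F] L) ^ n) c = c + 1 := by
  obtain ⟨c, hc⟩ :=
    exists_pow_eq_add_one (K := K) (Nat.one_lt_pow hn (Fintype.one_lt_card (α := k)))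
  exact ⟨algebraMap K L c, by rw [partialFrobenius_pow_algebraMap, hc, map_add, map_one]⟩

lemma map_smul_eq_partialFrobenius_smul {V : Type*} [AddCommGroup V] [Module L V] (φ : V →+ V)
    (hF : ∀ (a : F) (v : V), φ (algebraMap F L a • v) = algebraMap F L a • φ v)
    (hfrob : ∀ (c : K) (v : V),
      φ (algebraMap K L c • v) = (algebraMap K L c ^ Fintype.card k) • φ v)
    (x : L) (v : V) : φ (x • v) = partialFrobenius htensor x • φ v := by
  obtain ⟨t, rfl⟩ := (tensorEquiv htensor).surjective x
  induction t with
  | zero => simp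
  | add s t hs ht => simp only [map_add, add_smul, hs, ht]
  | tmul a c =>
    rw [tensorEquiv_tmul, mul_smul, hF, hfrob, map_mul, AlgEquiv.commutes,
      partialFrobenius_algebraMap, mul_smul]

end Frobenius

theorem isoShtuka_semisimple_general
    (k : Type*) [Field k] [Fintype k]
    (kbar : Type*) [Field kbar] [Algebra k kbar] [IsAlgClosure k kbar]
    (F : Type*) [Field F] [Algebra k F]
    (Fbr : Type*) [Field Fbr] [Algebra k Fbr] [Algebra F Fbr] [Algebra kbar Fbr]
    [IsScalarTower k F Fbr] [IsScalarTower k kbar Fbr]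
    (htensor : Function.Bijective
      ⇑(Algebra.TensorProduct.productMap (IsScalarTower.toAlgHom k F Fbr)
        (IsScalarTower.toAlgHom k kbar Fbr)))
    (V : Type*) [AddCommGroup V] [Module Fbr V] [FiniteDimensional Fbr V]
    (φ : V → V)
    (hbij : Function.Bijective φ)
    (hadd : ∀ v w : V, φ (v + w) = φ v + φ w)
    (hF : ∀ (a : F) (v : V), φ (algebraMap F Fbr a • v) = algebraMap F Fbr a • φ v)
    (hfrob : ∀ (c : kbar) (v : V),
      φ (algebraMap kbar Fbr c • v) = (algebraMap kbar Fbr c ^ Fintype.card k) • φ v)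
    (W : Submodule Fbr V) (hW : φ '' (W : Set V) = (W : Set V)) :
    ∃ W' : Submodule Fbr V, φ '' (W' : Set V) = (W' : Set V) ∧ IsCompl W W' := by
  have : Algebra.IsAlgebraic k kbar := IsAlgClosure.isAlgebraic
  have : IsAlgClosed kbar := IsAlgClosure.isAlgClosed k
  have : Algebra.IsIntegral F Fbr := isIntegral_of_tensorEquiv htensor
  obtain ⟨p, _⟩ := CharP.exists k
  have : Fact p.Prime := ⟨CharP.char_is_prime k p⟩
  have : CharP F p := charP_of_injective_algebraMap (algebraMap k F).injective p
  let σ : Fbr ≃ₐ[F] Fbr := partialFrobenius htensor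
  have : RingHomInvPair ((σ : Fbr →ₐ[F] Fbr) : Fbr →+* Fbr) (σ.symm : Fbr →+* Fbr) :=
    .of_ringEquiv σ.toRingEquiv
  have : RingHomInvPair (σ.symm : Fbr →+* Fbr) ((σ : Fbr →ₐ[F] Fbr) : Fbr →+* Fbr) :=
    .of_ringEquiv_symm σ.toRingEquiv
  let Φ : V ≃ₛₗ[((σ : Fbr →ₐ[F] Fbr) : Fbr →+* Fbr)] V :=
    { AddEquiv.mk' (.ofBijective φ hbij) hadd with
      map_smul' := map_smul_eq_partialFrobenius_smul htensor (.mk' φ hadd) hF hfrob }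
  have hσ (r : ℕ) := exists_partialFrobenius_pow_eq_add_one htensor
    (pow_ne_zero r (Fact.out : p.Prime).ne_zero)
  obtain ⟨W', hW', hc⟩ := exists_isCompl_apply_mem_iff (φ := Φ) (W := W) p hσ
    ((image_eq_self_iff_forall_mem_iff hbij).1 hW)
  exact ⟨W', (image_eq_self_iff_forall_mem_iff hbij).2 hW', hc⟩

theorem isoShtuka_semisimple
    -- the finite base field `k = 𝔽_q`
    (k : Type) [Field k] [Fintype k]
    -- an algebraic closure `k̄` of `k`
    (kbar : Type) [Field kbar] [Algebra k kbar] [IsAlgClosure k kbar]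
    -- the function field `F` of a geometrically connected smooth projective curve over `k`:
    -- `F` is a finite extension of `k(t)` …
    (F : Type) [Field F] [Algebra k F]
    [Algebra (RatFunc k) F] [IsScalarTower k (RatFunc k) F]
    (hFF : FunctionField k F)
    -- … in which `k` is the exact field of constants (geometric connectedness)
    (hconst : ∀ a : F, IsAlgebraic k a → ∃ c : k, algebraMap k F c = a)
    -- the field `F̆ = F ⊗_k k̄`
    (Fbr : Type) [Field Fbr] [Algebra k Fbr] [Algebra F Fbr] [Algebra kbar Fbr]
    [IsScalarTower k F Fbr] [IsScalarTower k kbar Fbr]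
    (htensor : Function.Bijective
      ⇑(Algebra.TensorProduct.productMap (IsScalarTower.toAlgHom k F Fbr)
        (IsScalarTower.toAlgHom k kbar Fbr)))
    -- an iso-Shtuka `(V, φ)` over `F`
    (V : Type) [AddCommGroup V] [Module Fbr V] [FiniteDimensional Fbr V]
    (φ : V → V)
    (hbij : Function.Bijective φ)
    (hadd : ∀ v w : V, φ (v + w) = φ v + φ w)
    (hF : ∀ (a : F) (v : V), φ (algebraMap F Fbr a • v) = algebraMap F Fbr a • φ v)
    (hfrob : ∀ (c : kbar) (v : V),
      φ (algebraMap kbar Fbr c • v) = (algebraMap kbar Fbr c ^ Fintype.card k) • φ v)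
    -- every `φ`-stable subspace …
    (W : Submodule Fbr V) (hW : φ '' (W : Set V) = (W : Set V)) :
    -- … admits a `φ`-stable complement
    ∃ W' : Submodule Fbr V, φ '' (W' : Set V) = (W' : Set V) ∧ IsCompl W W' :=
  isoShtuka_semisimple_general k kbar F Fbr htensor V φ hbij hadd hF hfrob W hW
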